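/- Let ω : A × B → k be a non-degenerate Hopf pairing between Hopf algebras over a field k with inverse copairing Σ_i b_i ⊗ a_i and bijective antipodes, and let ω⁻ : B × A → k be the Hopf pairing ω⁻(b, a) = ω(S_A⁻¹(a), S_B⁻¹(b)), with inverse copairing Σ_i S_A(a_i) ⊗ S_B(b_i). Let (X, ρ, δ) be a left Yetter–Drinfel'd module over A. Then applying the construction Ω for ω (giving a left Yetter–Drinfel'd module over B) followed by the analogous construction for ω⁻ yields the left A-Yetter–Drinfel'd module (X, ρ ∘ (S_A⁻² ⊗ id), (S_A² ⊗ id) ∘ δ), i.e. with action a ·' x = S_A⁻²(a)·x and coaction x ↦ S_A²(x_{(-1)}) ⊗ x_{(0)}; moreover θ_X(x) := S_A(x_{(-1)})·x_{(0)} is a bijection X → X which is an isomorphism of left A-Yetter–Drinfel'd modules from this twisted module to the original (X, ρ, δ). -/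

import Mathlib

open TensorProduct

noncomputable section

variable {k : Type*} [Field k]
variable {A : Type*} [Ring A] [HopfAlgebra k A]
variable {X Y Z : Type*} [AddCommGroup X] [Module k X] [AddCommGroup Y] [Module k Y]
  [AddCommGroup Z] [Module k Z]

/-- LHS of the left Yetter–Drinfel'd compatibility condition, as a linear map
`A ⊗ X → A ⊗ X` sending `h ⊗ x` to `h₍₁₎x₍₋₁₎ ⊗ h₍₂₎ · x₍₀₎`. -/
def ydL (act : A ⊗[k] X →ₗ[k] X) (coact : X →ₗ[k] A ⊗[k] X) :
    A ⊗[k] X →ₗ[k] A ⊗[k] X :=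
  TensorProduct.map (LinearMap.mul' k A) act
    ∘ₗ (TensorProduct.tensorTensorTensorComm k A A A X).toLinearMap
    ∘ₗ TensorProduct.map (Coalgebra.comul (R := k)) coact

/-- RHS of the left Yetter–Drinfel'd compatibility condition, sending `h ⊗ x` to
`(h₍₁₎·x)₍₋₁₎ h₍₂₎ ⊗ (h₍₁₎·x)₍₀₎`. -/
def ydR (act : A ⊗[k] X →ₗ[k] X) (coact : X →ₗ[k] A ⊗[k] X) :
    A ⊗[k] X →ₗ[k] A ⊗[k] X :=
  TensorProduct.map (LinearMap.mul' k A) LinearMap.id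
    ∘ₗ (TensorProduct.assoc k A A X).symm.toLinearMap
    ∘ₗ LinearMap.lTensor A (TensorProduct.comm k X A).toLinearMap
    ∘ₗ (TensorProduct.assoc k A X A).toLinearMap
    ∘ₗ LinearMap.rTensor A coact
    ∘ₗ LinearMap.rTensor A act
    ∘ₗ (TensorProduct.assoc k A X A).symm.toLinearMap
    ∘ₗ LinearMap.lTensor A (TensorProduct.comm k A X).toLinearMap
    ∘ₗ (TensorProduct.assoc k A A X).toLinearMap
    ∘ₗ LinearMap.rTensor X (Coalgebra.comul (R := k))

/-- A left Yetter–Drinfel'd module structure over the Hopf algebra `A` on the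
vector space `X`: a left action, a left coaction, and the compatibility. -/
structure IsYD (act : A ⊗[k] X →ₗ[k] X) (coact : X →ₗ[k] A ⊗[k] X) : Prop where
  act_one : ∀ x : X, act (1 ⊗ₜ[k] x) = x
  act_mul : ∀ (a a' : A) (x : X),
    act ((a * a') ⊗ₜ[k] x) = act (a ⊗ₜ[k] act (a' ⊗ₜ[k] x))
  coassoc : (TensorProduct.assoc k A A X).toLinearMap
      ∘ₗ LinearMap.rTensor X (Coalgebra.comul (R := k)) ∘ₗ coact
      = LinearMap.lTensor A coact ∘ₗ coact
  counit_coact : (TensorProduct.lid k X).toLinearMap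
      ∘ₗ LinearMap.rTensor X (Coalgebra.counit (R := k)) ∘ₗ coact = LinearMap.id
  yd : ydL act coact = ydR act coact

/-- The diagonal action `h · (x ⊗ y) = h₍₁₎·x ⊗ h₍₂₎·y` on a tensor product. -/
def tAct (actX : A ⊗[k] X →ₗ[k] X) (actY : A ⊗[k] Y →ₗ[k] Y) :
    A ⊗[k] (X ⊗[k] Y) →ₗ[k] X ⊗[k] Y :=
  TensorProduct.map actX actY
    ∘ₗ (TensorProduct.tensorTensorTensorComm k A A X Y).toLinearMap
    ∘ₗ LinearMap.rTensor (X ⊗[k] Y) (Coalgebra.comul (R := k))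

/-- The codiagonal coaction `x ⊗ y ↦ x₍₋₁₎y₍₋₁₎ ⊗ (x₍₀₎ ⊗ y₍₀₎)` on a tensor product. -/
def tCoact (coactX : X →ₗ[k] A ⊗[k] X) (coactY : Y →ₗ[k] A ⊗[k] Y) :
    X ⊗[k] Y →ₗ[k] A ⊗[k] (X ⊗[k] Y) :=
  LinearMap.rTensor (X ⊗[k] Y) (LinearMap.mul' k A)
    ∘ₗ (TensorProduct.tensorTensorTensorComm k A X A Y).toLinearMap
    ∘ₗ TensorProduct.map coactX coactY

/-- The Yetter–Drinfel'd braiding `c_{X,Y} : x ⊗ y ↦ x₍₋₁₎ · y ⊗ x₍₀₎`. -/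
def ydBraid (coactX : X →ₗ[k] A ⊗[k] X) (actY : A ⊗[k] Y →ₗ[k] Y) :
    X ⊗[k] Y →ₗ[k] Y ⊗[k] X :=
  LinearMap.rTensor X actY
    ∘ₗ (TensorProduct.assoc k A Y X).symm.toLinearMap
    ∘ₗ LinearMap.lTensor A (TensorProduct.comm k X Y).toLinearMap
    ∘ₗ (TensorProduct.assoc k A X Y).toLinearMap
    ∘ₗ LinearMap.rTensor Y coactX

/-- The map `θ_X : x ↦ S(x₍₋₁₎) · x₍₀₎`. -/
def ydTheta (act : A ⊗[k] X →ₗ[k] X) (coact : X →ₗ[k] A ⊗[k] X) : X →ₗ[k] X :=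
  act ∘ₗ LinearMap.rTensor X (HopfAlgebra.antipode (R := k)) ∘ₗ coact

section Pairing

variable {B : Type*} [Ring B] [HopfAlgebra k B]

/-- A Hopf pairing between the Hopf algebras `A` and `B` over the field `k`. -/
structure IsHopfPairing (ω : A →ₗ[k] B →ₗ[k] k) : Prop where
  mul_left : ∀ (a a' : A) (b : B),
    ω (a * a') b =
      (LinearMap.mul' k k ∘ₗ TensorProduct.map (ω a') (ω a)) (Coalgebra.comul (R := k) b)
  one_left : ∀ b : B, ω 1 b = Coalgebra.counit (R := k) b
  mul_right : ∀ (a : A) (b b' : B),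
    ω a (b * b') =
      (LinearMap.mul' k k ∘ₗ TensorProduct.map (ω.flip b') (ω.flip b)) (Coalgebra.comul (R := k) a)
  one_right : ∀ a : A, ω a 1 = Coalgebra.counit (R := k) a

/-- Non-degeneracy of a pairing, witnessed by an inverse copairing `Σᵢ bᵢ ⊗ aᵢ`. -/
def IsInverseCopairing (ω : A →ₗ[k] B →ₗ[k] k) {n : ℕ} (b : Fin n → B) (a : Fin n → A) :
    Prop :=
  (∀ x : A, ∑ i, ω x (b i) • a i = x) ∧ (∀ y : B, ∑ i, ω (a i) y • b i = y)

/-- The left `B`-action `b · x := ω(x₍₋₁₎, S_B⁻²(b)) x₍₀₎` of the functor `Ω`. -/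
def omegaAct (ω : A →ₗ[k] B →ₗ[k] k) (SB' : B →ₗ[k] B) (coact : X →ₗ[k] A ⊗[k] X) :
    B ⊗[k] X →ₗ[k] X :=
  (TensorProduct.lid k X).toLinearMap
    ∘ₗ LinearMap.rTensor X (TensorProduct.lift ω)
    ∘ₗ LinearMap.rTensor X (TensorProduct.comm k B A).toLinearMap
    ∘ₗ (TensorProduct.assoc k B A X).symm.toLinearMap
    ∘ₗ LinearMap.lTensor B coact
    ∘ₗ LinearMap.rTensor X (SB' ∘ₗ SB')

/-- The left `B`-coaction `x ↦ Σᵢ S_B²(bᵢ) ⊗ (aᵢ · x)` of the functor `Ω`. -/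
def omegaCoact {n : ℕ} (b : Fin n → B) (a : Fin n → A) (act : A ⊗[k] X →ₗ[k] X) :
    X →ₗ[k] B ⊗[k] X :=
  ∑ i, (TensorProduct.mk k B X
      (HopfAlgebra.antipode (R := k) (HopfAlgebra.antipode (R := k) (b i))))
    ∘ₗ act ∘ₗ TensorProduct.mk k A X (a i)

section Helpers

open Coalgebra HopfAlgebra

theorem aux_coas {H M : Type*} [AddCommGroup H] [Module k H] [Coalgebra k H]
    [AddCommGroup M] [Module k M] (T : H → H → H → M)
    (h1 : ∀ b c, IsLinearMap k (fun a => T a b c))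
    (h2 : ∀ a c, IsLinearMap k (fun b => T a b c))
    (h3 : ∀ a b, IsLinearMap k (fun c => T a b c)) {h : H} {ι : Type*} (R : Repr k h ι) :
    ∑ i ∈ R.index, ∑ j ∈ (ℛ k (R.left i)).index,
      T ((ℛ k (R.left i)).left j) ((ℛ k (R.left i)).right j) (R.right i)
    = ∑ i ∈ R.index, ∑ j ∈ (ℛ k (R.right i)).index,
      T (R.left i) ((ℛ k (R.right i)).left j) ((ℛ k (R.right i)).right j) := by
  let F : H →ₗ[k] (H ⊗[k] H) →ₗ[k] M :=
    { toFun := fun a => TensorProduct.lift (LinearMap.mk₂ k (fun b c => T a b c)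
        (fun b b' c => (h2 a c).map_add b b') (fun r b c => (h2 a c).map_smul r b)
        (fun b c c' => (h3 a b).map_add c c') (fun r b c => (h3 a b).map_smul r c))
      map_add' := fun a a' => by
        ext b c; simpa using (h1 b c).map_add a a'
      map_smul' := fun r a => by
        ext b c; simpa using (h1 b c).map_smul r a }
  have hF : ∀ a b c, F a (b ⊗ₜ c) = T a b c := fun a b c => rfl
  have := congrArg (TensorProduct.lift F)
    (Coalgebra.sum_tmul_tmul_eq R (fun i => ℛ k (R.left i)) (fun i => ℛ k (R.right i)))
  simpa [map_sum, hF] using this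

theorem aux_counit_left {H M : Type*} [AddCommGroup H] [Module k H] [Coalgebra k H]
    [AddCommGroup M] [Module k M] (f : H →ₗ[k] M) {h : H} {ι : Type*} (R : Repr k h ι) :
    ∑ i ∈ R.index, counit (R := k) (R.left i) • f (R.right i) = f h := by
  conv_rhs => rw [← Coalgebra.sum_counit_smul R]
  simp [map_sum]

theorem aux_counit_right {H M : Type*} [AddCommGroup H] [Module k H] [Coalgebra k H]
    [AddCommGroup M] [Module k M] (f : H →ₗ[k] M) {h : H} {ι : Type*} (R : Repr k h ι) :
    ∑ i ∈ R.index, counit (R := k) (R.right i) • f (R.left i) = f h := by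
  have := congrArg (TensorProduct.rid k M) (Coalgebra.sum_map_tmul_counit_eq (R := k) f h (repr := R))
  simpa only [map_sum, TensorProduct.rid_tmul, one_smul] using this

/-- abstract convolution cancellation -/
theorem aux_conv {H E : Type*} [AddCommGroup H] [Module k H] [Coalgebra k H]
    [Ring E] [Algebra k E] (P Q R : H →ₗ[k] E) (u v : E)
    (hPQ : ∀ h : H, ∑ i ∈ (ℛ k h).index, P ((ℛ k h).right i) * Q ((ℛ k h).left i)
      = counit (R := k) h • u)
    (hQR : ∀ h : H, ∑ i ∈ (ℛ k h).index, Q ((ℛ k h).right i) * R ((ℛ k h).left i)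
      = counit (R := k) h • v) (h : H) : u * R h = P h * v := by
  have key := aux_coas (k := k) (fun a b c => P c * (Q b * R a))
    (fun b c => ⟨by simp [mul_add], by simp⟩)
    (fun b c => ⟨by simp [mul_add, add_mul], by simp⟩)
    (fun b c => ⟨by simp [add_mul], by simp⟩) (ℛ k h)
  simp only [← Finset.mul_sum, hQR] at key
  simp only [← mul_assoc, ← Finset.sum_mul, hPQ] at key
  have e1 := aux_counit_right (k := k) (LinearMap.mulLeft k u ∘ₗ R) (ℛ k h)
  have e2 := aux_counit_left (k := k) (LinearMap.mulRight k v ∘ₗ P) (ℛ k h)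
  simp only [LinearMap.comp_apply, LinearMap.mulLeft_apply, LinearMap.mulRight_apply] at e1 e2
  rw [← e1, ← e2]
  simpa using key.symm

theorem aux_comul_antipode_inner (a : A) :
    ∑ i ∈ (ℛ k a).index, (antipode k ((ℛ k a).left i) ⊗ₜ[k] (1 : A)) *
      comul (R := k) ((ℛ k a).right i) = 1 ⊗ₜ[k] a := by
  have key := aux_coas (k := k) (fun a b c : A => (antipode k a * b) ⊗ₜ[k] c)
    (fun b c => ⟨by simp [add_mul, add_tmul], by simp [smul_tmul']⟩)
    (fun b c => ⟨by simp [mul_add, add_tmul], by simp [smul_tmul']⟩)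
    (fun b c => ⟨by simp [tmul_add], by simp⟩) (ℛ k a)
  have e : ∀ i, (antipode k ((ℛ k a).left i) ⊗ₜ[k] (1 : A)) * comul (R := k) ((ℛ k a).right i)
      = ∑ j ∈ (ℛ k ((ℛ k a).right i)).index,
        (antipode k ((ℛ k a).left i) * (ℛ k ((ℛ k a).right i)).left j) ⊗ₜ[k]
          (ℛ k ((ℛ k a).right i)).right j := by
    intro i
    conv_lhs => rw [← (ℛ k ((ℛ k a).right i)).eq]
    simp [Finset.mul_sum]
  simp only [e]
  rw [← key]
  simp only [← sum_tmul, sum_antipode_mul_eq_smul]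
  have := aux_counit_left (k := k) (TensorProduct.mk k A A 1) (ℛ k a)
  simpa [smul_tmul'] using this

theorem aux_comul_antipode (a : A) :
    comul (R := k) (antipode k a) = ∑ i ∈ (ℛ k a).index,
      antipode k ((ℛ k a).right i) ⊗ₜ[k] antipode k ((ℛ k a).left i) := by
  let G : A →ₗ[k] A ⊗[k] A := TensorProduct.map (antipode k) (antipode k) ∘ₗ
    (TensorProduct.comm k A A).toLinearMap ∘ₗ comul
  have hG : ∀ a : A, G a = ∑ i ∈ (ℛ k a).index,
      antipode k ((ℛ k a).right i) ⊗ₜ[k] antipode k ((ℛ k a).left i) := by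
    intro a
    simp only [G, LinearMap.comp_apply]
    conv_lhs => rw [← (ℛ k a).eq]
    simp [map_sum]
  have h1 : WithConv.toConv G * WithConv.toConv (comul (R := k) (A := A)) = 1 := by
    ext a
    rw [(ℛ k a).convMul_apply]
    simp only [hG]
    have key := aux_coas (k := k)
      (fun a b c : A => (antipode k b ⊗ₜ[k] antipode k a) * comul (R := k) c)
      (fun b c => ⟨by simp [add_mul, tmul_add], by simp⟩)
      (fun b c => ⟨by simp [add_mul, add_tmul], by simp [← smul_tmul']⟩)
      (fun b c => ⟨by simp [mul_add], by simp⟩) (ℛ k a)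
    simp only [Finset.sum_mul]
    rw [key]
    have e : ∀ x y : A, antipode k x ⊗ₜ[k] antipode k y =
      ((1 : A) ⊗ₜ[k] antipode k y) * (antipode k x ⊗ₜ[k] (1 : A)) := by intros; simp
    simp only [e, mul_assoc, ← Finset.mul_sum, aux_comul_antipode_inner]
    simp only [Algebra.TensorProduct.tmul_mul_tmul, one_mul, ← tmul_sum,
      sum_antipode_mul_eq_smul]
    simp [Algebra.algebraMap_eq_smul_one, Algebra.TensorProduct.one_def]
  have h2 := left_inv_eq_right_inv h1 LinearMap.comul_right_inv
  have h3 : G = comul ∘ₗ antipode k := WithConv.toConv_injective h2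
  rw [← hG, h3]; rfl

/-- the representation of `comul (S a)` -/
def auxRepr (a : A) : Repr k (antipode k a) (A × A) where
  index := (ℛ k a).index
  left := fun i => antipode k ((ℛ k a).right i)
  right := fun i => antipode k ((ℛ k a).left i)
  eq := (aux_comul_antipode a).symm

theorem aux_pair {B : Type*} [Ring B] [HopfAlgebra k B] (ω : A →ₗ[k] B →ₗ[k] k)
    (hω : IsHopfPairing ω) (a : A) (b : B) : ω (antipode k a) b = ω a (antipode k b) := by
  let c : (B →ₗ[k] k) →ₗ[k] WithConv (B →ₗ[k] k) := (WithConv.linearEquiv k _).symm.toLinearMap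
  have hc : ∀ f, c f = WithConv.toConv f := fun f => rfl
  let P : A →ₗ[k] WithConv (B →ₗ[k] k) := c ∘ₗ ω.compl₂ (antipode k)
  let Q : A →ₗ[k] WithConv (B →ₗ[k] k) := c ∘ₗ ω
  let R : A →ₗ[k] WithConv (B →ₗ[k] k) := c ∘ₗ ω ∘ₗ antipode k
  have hm : ∀ a a', Q (a * a') = Q a' * Q a := by
    intro a a'
    ext b
    exact hω.mul_left a a' b
  have h1 : Q 1 = 1 := by
    ext b
    exact hω.one_left b
  have key := aux_conv (k := k) P Q R 1 1 ?_ ?_ a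
  · rw [one_mul, mul_one] at key
    exact congrArg (fun f => f.ofConv b) key
  · intro h
    ext b
    have e : ∀ x y, (P x * Q y).ofConv b = ∑ j ∈ (ℛ k b).index,
        ω x (antipode k ((ℛ k b).left j)) * ω y ((ℛ k b).right j) := by
      intro x y
      exact (ℛ k b).convMul_apply (P x) (Q y)
    simp only [WithConv.ofConv_sum, LinearMap.sum_apply, e]
    rw [Finset.sum_comm]
    have e2 : ∀ y y' : B, ∑ i ∈ (ℛ k h).index,
        ω ((ℛ k h).right i) y * ω ((ℛ k h).left i) y' = ω h (y * y') := by
      intro y y'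
      rw [hω.mul_right, ← (ℛ k h).eq]
      simp [map_sum, mul_comm]
    simp only [e2, ← map_sum, sum_antipode_mul_eq_smul]
    simp [hω.one_right, mul_comm]
  · intro h
    have e : ∀ x, R x = Q (antipode k x) := fun x => rfl
    simp only [e, ← hm, ← map_sum, sum_antipode_mul_eq_smul, map_smul, h1]

theorem aux_coact_coas {M : Type*} [AddCommGroup M] [Module k M]
    {act : A ⊗[k] X →ₗ[k] X} {coact : X →ₗ[k] A ⊗[k] X} (hX : IsYD act coact)
    (D : X → Finset (A × X)) (hD : ∀ x, coact x = ∑ p ∈ D x, p.1 ⊗ₜ[k] p.2)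
    (T : A → A → X → M)
    (h1 : ∀ b c, IsLinearMap k (fun a => T a b c))
    (h2 : ∀ a c, IsLinearMap k (fun b => T a b c))
    (h3 : ∀ a b, IsLinearMap k (fun c => T a b c)) (x : X) :
    ∑ p ∈ D x, ∑ j ∈ (ℛ k p.1).index, T ((ℛ k p.1).left j) ((ℛ k p.1).right j) p.2
    = ∑ p ∈ D x, ∑ q ∈ D p.2, T p.1 q.1 q.2 := by
  let F : A →ₗ[k] (A ⊗[k] X) →ₗ[k] M :=
    { toFun := fun a => TensorProduct.lift (LinearMap.mk₂ k (fun b c => T a b c)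
        (fun b b' c => (h2 a c).map_add b b') (fun r b c => (h2 a c).map_smul r b)
        (fun b c c' => (h3 a b).map_add c c') (fun r b c => (h3 a b).map_smul r c))
      map_add' := fun a a' => by
        ext b c; simpa using (h1 b c).map_add a a'
      map_smul' := fun r a => by
        ext b c; simpa using (h1 b c).map_smul r a }
  have hF : ∀ a b c, F a (b ⊗ₜ c) = T a b c := fun a b c => rfl
  have key := congrArg (TensorProduct.lift F) (LinearMap.congr_fun hX.coassoc x)
  simp only [LinearMap.comp_apply, hD x, map_sum, LinearMap.rTensor_tmul,
    LinearMap.lTensor_tmul] at key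
  have e1 : ∀ p : A × X, comul (R := k) p.1 =
    ∑ j ∈ (ℛ k p.1).index, (ℛ k p.1).left j ⊗ₜ[k] (ℛ k p.1).right j := fun p => (ℛ k p.1).eq.symm
  have e2 : ∀ p : A × X, coact p.2 = ∑ q ∈ D p.2, q.1 ⊗ₜ[k] q.2 := fun p => hD p.2
  simp only [e1, e2] at key
  simpa [map_sum, sum_tmul, tmul_sum, hF] using key

theorem aux_coact_counit {M : Type*} [AddCommGroup M] [Module k M]
    {act : A ⊗[k] X →ₗ[k] X} {coact : X →ₗ[k] A ⊗[k] X} (hX : IsYD act coact)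
    (D : X → Finset (A × X)) (hD : ∀ x, coact x = ∑ p ∈ D x, p.1 ⊗ₜ[k] p.2)
    (f : X →ₗ[k] M) (x : X) :
    ∑ p ∈ D x, counit (R := k) p.1 • f p.2 = f x := by
  have key := congrArg f (LinearMap.congr_fun hX.counit_coact x)
  simpa [hD x, map_sum] using key

/-- right multiplication on the first factor -/
def auxMu (c : A) : A ⊗[k] X →ₗ[k] A ⊗[k] X := LinearMap.rTensor X (LinearMap.mulRight k c)

theorem aux_yd {act : A ⊗[k] X →ₗ[k] X} {coact : X →ₗ[k] A ⊗[k] X} (hX : IsYD act coact)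
    {h : A} {ι : Type*} (R : Repr k h ι) (x : X) :
    ∑ i ∈ R.index, TensorProduct.map (LinearMap.mulLeft k (R.left i))
      (TensorProduct.curry act (R.right i)) (coact x)
    = ∑ i ∈ R.index, auxMu (R.right i) (coact (act (R.left i ⊗ₜ x))) := by
  have key := LinearMap.congr_fun hX.yd (h ⊗ₜ x)
  simp only [ydL, ydR, LinearMap.comp_apply, TensorProduct.map_tmul, LinearMap.rTensor_tmul,
    ← R.eq, sum_tmul, map_sum, LinearEquiv.coe_coe, TensorProduct.assoc_tmul,
    LinearMap.lTensor_tmul, TensorProduct.comm_tmul, TensorProduct.assoc_symm_tmul] at key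
  convert key using 2 with i _ i _
  · induction coact x using TensorProduct.induction_on with
    | zero => simp
    | tmul a y => simp
    | add y z hy hz => simp only [tmul_add, map_add, hy, hz]
  · induction coact (act (R.left i ⊗ₜ x)) using TensorProduct.induction_on with
    | zero => simp
    | tmul a y => simp [auxMu]
    | add y z hy hz => simp only [add_tmul, map_add, hy, hz]

theorem aux_theta {act : A ⊗[k] X →ₗ[k] X} {coact : X →ₗ[k] A ⊗[k] X}
    (D : X → Finset (A × X)) (hD : ∀ x, coact x = ∑ p ∈ D x, p.1 ⊗ₜ[k] p.2) (x : X) :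
    ydTheta act coact x = ∑ p ∈ D x, act (antipode k p.1 ⊗ₜ p.2) := by
  simp [ydTheta, hD x, map_sum]

theorem aux_linear {act : A ⊗[k] X →ₗ[k] X} {coact : X →ₗ[k] A ⊗[k] X} (hX : IsYD act coact)
    (h : A) (x : X) :
    ydTheta act coact (act (h ⊗ₜ x)) =
      act (antipode k (antipode k h) ⊗ₜ ydTheta act coact x) := by
  let L : A →ₗ[k] Module.End k X := TensorProduct.curry act
  have hL : ∀ a x, L a x = act (a ⊗ₜ x) := fun _ _ => rfl
  have hmul : ∀ a b, L (a * b) = L a * L b := by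
    intro a b; ext x; exact hX.act_mul a b x
  have hone : L 1 = 1 := by ext x; exact hX.act_one x
  let θ : Module.End k X := ydTheta act coact
  have key := aux_conv (k := k) (L ∘ₗ antipode k ∘ₗ antipode k) (L ∘ₗ antipode k)
    (LinearMap.mulLeft k θ ∘ₗ L) 1 θ ?_ ?_ h
  · rw [one_mul] at key
    exact LinearMap.congr_fun key x
  · intro h
    simp only [LinearMap.comp_apply, ← hmul, ← antipode_mul_antidistrib, ← map_sum,
      sum_mul_antipode_eq_smul, map_smul, antipode_one, hone]
  · intro h
    ext x
    have key := congrArg (act ∘ₗ LinearMap.rTensor X (antipode k)) (aux_yd hX (ℛ k h) x)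
    simp only [map_sum] at key
    have e1 : ∀ (c : A) (t : A ⊗[k] X), (act ∘ₗ LinearMap.rTensor X (antipode k)) (auxMu c t)
        = L (antipode k c) ((act ∘ₗ LinearMap.rTensor X (antipode k)) t) := by
      intro c t
      induction t using TensorProduct.induction_on with
      | zero => simp
      | tmul a y => simp [auxMu, antipode_mul_antidistrib, hX.act_mul, hL]
      | add y z hy hz => simp only [map_add, hy, hz]
    have e2 : ∀ t : A ⊗[k] X, ∑ i ∈ (ℛ k h).index, (act ∘ₗ LinearMap.rTensor X (antipode k))
        (TensorProduct.map (LinearMap.mulLeft k ((ℛ k h).left i))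
          (TensorProduct.curry act ((ℛ k h).right i)) t)
        = counit (R := k) h • (act ∘ₗ LinearMap.rTensor X (antipode k)) t := by
      intro t
      induction t using TensorProduct.induction_on with
      | zero => simp
      | tmul a y =>
        simp only [LinearMap.comp_apply, TensorProduct.map_tmul, LinearMap.rTensor_tmul,
          LinearMap.mulLeft_apply, antipode_mul_antidistrib, TensorProduct.curry_apply,
          ← hX.act_mul, mul_assoc, ← map_sum, ← sum_tmul, ← Finset.mul_sum,
          sum_antipode_mul_eq_smul]
        simp [← smul_tmul']
      | add y z hy hz => simp only [map_add, Finset.sum_add_distrib, hy, hz, smul_add]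
    rw [e2] at key
    simp only [e1] at key
    simp only [LinearMap.sum_apply]
    exact key.symm

theorem aux_colinear {act : A ⊗[k] X →ₗ[k] X} {coact : X →ₗ[k] A ⊗[k] X} (hX : IsYD act coact)
    (D : X → Finset (A × X)) (hD : ∀ x, coact x = ∑ p ∈ D x, p.1 ⊗ₜ[k] p.2) (x : X) :
    coact (ydTheta act coact x) =
      ∑ p ∈ D x, antipode k (antipode k p.1) ⊗ₜ ydTheta act coact p.2 := by
  have hmu_add : ∀ (a b : A) (t : A ⊗[k] X), auxMu (a + b) t = auxMu a t + auxMu b t := by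
    intro a b t
    have : LinearMap.mulRight k (a + b) = LinearMap.mulRight k a + LinearMap.mulRight k b := by
      ext; simp [mul_add]
    simp [auxMu, this, LinearMap.rTensor_add]
  have hmu_smul : ∀ (r : k) (b : A) (t : A ⊗[k] X), auxMu (r • b) t = r • auxMu b t := by
    intro r b t
    have : LinearMap.mulRight k (r • b) = r • LinearMap.mulRight k b := by
      ext; simp
    simp [auxMu, this, LinearMap.rTensor_smul]
  have hmu_mul : ∀ (a b : A) (t : A ⊗[k] X), auxMu a (auxMu b t) = auxMu (b * a) t := by
    intro a b t
    induction t using TensorProduct.induction_on with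
    | zero => simp
    | tmul a y => simp [auxMu, mul_assoc]
    | add y z hy hz => simp only [map_add, hy, hz]
  have hmu_one : ∀ (t : A ⊗[k] X), auxMu 1 t = t := by
    intro t; simp [auxMu]
  -- inner cancellation
  have inner : ∀ (f : X →ₗ[k] X) (y : X), ∑ q ∈ D y,
      TensorProduct.map (LinearMap.mulLeft k (antipode k q.1)) f (coact q.2) = 1 ⊗ₜ f y := by
    intro f y
    have key := aux_coact_coas hX D hD (fun a b c => (antipode k a * b) ⊗ₜ[k] f c)
      (fun b c => ⟨by simp [add_mul, add_tmul], by simp [smul_tmul']⟩)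
      (fun b c => ⟨by simp [mul_add, add_tmul], by simp [smul_tmul']⟩)
      (fun b c => ⟨by simp [tmul_add], by simp⟩) y
    simp only [← sum_tmul, sum_antipode_mul_eq_smul] at key
    have e := aux_coact_counit hX D hD (TensorProduct.mk k A X 1 ∘ₗ f) y
    simp only [LinearMap.comp_apply, TensorProduct.mk_apply, smul_tmul'] at e
    rw [← e, key]
    refine Finset.sum_congr rfl fun q _ => ?_
    simp [hD q.2, map_sum]
  have step : ∀ y : X, ∑ p ∈ D y, auxMu (antipode k p.1) (coact (ydTheta act coact p.2))
      = 1 ⊗ₜ ydTheta act coact y := by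
    intro y
    have k1 := aux_coact_coas hX D hD
      (fun a b c => auxMu (antipode k a) (coact (act (antipode k b ⊗ₜ c))))
      (fun b c => ⟨by simp [hmu_add], by simp [hmu_smul]⟩)
      (fun b c => ⟨by simp [add_tmul], by simp [← smul_tmul']⟩)
      (fun b c => ⟨by simp [tmul_add], by simp⟩) y
    have k2 := aux_coact_coas hX D hD
      (fun a b c => TensorProduct.map (LinearMap.mulLeft k (antipode k b))
        (TensorProduct.curry act (antipode k a)) (coact c))
      (fun b c => ⟨by simp [TensorProduct.map_add_right], by simp [TensorProduct.map_smul_right]⟩)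
      (fun b c => ⟨fun u v => by
          have : LinearMap.mulLeft k (antipode k u + antipode k v) =
            LinearMap.mulLeft k (antipode k u) + LinearMap.mulLeft k (antipode k v) := by
            ext; simp [add_mul]
          simp [this, TensorProduct.map_add_left], fun u v => by
          have : LinearMap.mulLeft k (u • antipode k v) =
            u • LinearMap.mulLeft k (antipode k v) := by
            ext; simp
          simp [this, TensorProduct.map_smul_left]⟩)
      (fun b c => ⟨by simp, by simp⟩) y
    simp only [inner] at k2
    simp only [aux_theta D hD, map_sum, tmul_sum]
    rw [← k1]
    refine Eq.trans ?_ k2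
    refine Finset.sum_congr rfl fun p _ => ?_
    exact (aux_yd hX (auxRepr p.1) p.2).symm
  have k3 := aux_coact_coas hX D hD
      (fun a b c => auxMu (antipode k (antipode k a)) (auxMu (antipode k b)
        (coact (ydTheta act coact c))))
      (fun b c => ⟨by simp [hmu_add], by simp [hmu_smul]⟩)
      (fun b c => ⟨by simp [hmu_add], by simp [hmu_smul]⟩)
      (fun b c => ⟨by simp, by simp⟩) x
  simp only [← map_sum, step] at k3
  have e : ∀ (g : A) (t : A ⊗[k] X), ∑ j ∈ (ℛ k g).index,
      auxMu (antipode k (antipode k ((ℛ k g).left j))) (auxMu (antipode k ((ℛ k g).right j)) t)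
      = counit (R := k) g • t := by
    intro g t
    let M : A →ₗ[k] A ⊗[k] X :=
      { toFun := fun c => auxMu c t
        map_add' := fun a b => hmu_add a b t
        map_smul' := fun a b => hmu_smul a b t }
    have hM : ∀ c, auxMu c t = M c := fun c => rfl
    simp only [hmu_mul]
    simp only [hM, ← antipode_mul_antidistrib, ← map_sum, sum_antipode_mul_eq_smul,
      map_smul, antipode_one]
    rw [← hM, hmu_one]
  simp only [e] at k3
  have e4 := aux_coact_counit hX D hD (coact ∘ₗ ydTheta act coact) x
  simp only [LinearMap.comp_apply] at e4
  rw [e4] at k3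
  rw [k3]
  simp [auxMu]

theorem aux_inv {act : A ⊗[k] X →ₗ[k] X} {coact : X →ₗ[k] A ⊗[k] X} (hX : IsYD act coact)
    (D : X → Finset (A × X)) (hD : ∀ x, coact x = ∑ p ∈ D x, p.1 ⊗ₜ[k] p.2) (x : X) :
    ∑ p ∈ D x, act (p.1 ⊗ₜ ydTheta act coact p.2) = x := by
  have key := aux_coact_coas hX D hD (fun a b c => act ((a * antipode k b) ⊗ₜ c))
      (fun b c => ⟨by simp [add_mul, add_tmul], by simp [← smul_tmul']⟩)
      (fun b c => ⟨by simp [mul_add, add_tmul], by simp [← smul_tmul']⟩)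
      (fun b c => ⟨by simp [tmul_add], by simp⟩) x
  simp only [← map_sum, ← sum_tmul, sum_mul_antipode_eq_smul] at key
  have e := aux_coact_counit hX D hD LinearMap.id x
  simp only [LinearMap.id_apply] at e
  conv_rhs => rw [← e]
  simp only [aux_theta D hD, tmul_sum, map_sum, ← hX.act_mul]
  simp only [map_sum] at key
  rw [← key]
  simp [← smul_tmul', hX.act_one]

end Helpers

/-- Let `ω : A × B → k` be a non-degenerate Hopf pairing with
inverse copairing `Σᵢ bᵢ ⊗ aᵢ` and bijective antipodes, and let
`ω⁻(b, a) = ω(S_A⁻¹(a), S_B⁻¹(b))`, with inverse copairing `Σᵢ S_A(aᵢ) ⊗ S_B(bᵢ)`.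
For a left Yetter–Drinfel'd module `(X, ρ, δ)` over `A`, applying `Ω` for `ω` and then
the analogous construction for `ω⁻` yields the `A`-Yetter–Drinfel'd module
`(X, ρ ∘ (S_A⁻² ⊗ id), (S_A² ⊗ id) ∘ δ)`; moreover `θ_X(x) = S_A(x₍₋₁₎)·x₍₀₎` is a
bijection and an isomorphism of Yetter–Drinfel'd modules from this twisted module to
the original one. -/
theorem omega_square (ω : A →ₗ[k] B →ₗ[k] k) (hω : IsHopfPairing ω)
    {n : ℕ} (b : Fin n → B) (a : Fin n → A) (hcop : IsInverseCopairing ω b a)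
    (SA' : A →ₗ[k] A) (SB' : B →ₗ[k] B)
    (hSA : SA' ∘ₗ HopfAlgebra.antipode (R := k) = LinearMap.id ∧
      HopfAlgebra.antipode (R := k) ∘ₗ SA' = LinearMap.id)
    (hSB : SB' ∘ₗ HopfAlgebra.antipode (R := k) = LinearMap.id ∧
      HopfAlgebra.antipode (R := k) ∘ₗ SB' = LinearMap.id)
    (ωminus : B →ₗ[k] A →ₗ[k] k)
    (hminus : ∀ (y : B) (x : A), ωminus y x = ω (SA' x) (SB' y))
    (actX : A ⊗[k] X →ₗ[k] X) (coactX : X →ₗ[k] A ⊗[k] X) (hX : IsYD actX coactX) :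
    -- the composite action is the `S_A⁻²`-twist of the original action ...
    omegaAct ωminus SA' (omegaCoact b a actX)
        = actX ∘ₗ LinearMap.rTensor X (SA' ∘ₗ SA')
    -- ... and the composite coaction is the `S_A²`-twist of the original coaction
    ∧ omegaCoact (fun i => HopfAlgebra.antipode (R := k) (a i))
          (fun i => HopfAlgebra.antipode (R := k) (b i))
          (omegaAct ω SB' coactX)
        = LinearMap.rTensor X
            ((HopfAlgebra.antipode (R := k) (A := A)) ∘ₗ HopfAlgebra.antipode (R := k))
          ∘ₗ coactX
    -- `θ_X` is bijective ...
    ∧ Function.Bijective (ydTheta actX coactX)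
    -- ... `A`-linear from the twisted module to the original one ...
    ∧ ydTheta actX coactX ∘ₗ (actX ∘ₗ LinearMap.rTensor X (SA' ∘ₗ SA'))
        = actX ∘ₗ LinearMap.lTensor A (ydTheta actX coactX)
    -- ... and `A`-colinear from the twisted module to the original one
    ∧ coactX ∘ₗ ydTheta actX coactX
        = LinearMap.lTensor A (ydTheta actX coactX)
          ∘ₗ (LinearMap.rTensor X
              ((HopfAlgebra.antipode (R := k) (A := A)) ∘ₗ HopfAlgebra.antipode (R := k))
            ∘ₗ coactX) := by
  classical
  have hA1 : ∀ x, SA' (HopfAlgebra.antipode k x) = x := LinearMap.congr_fun hSA.1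
  have hA2 : ∀ x, HopfAlgebra.antipode k (SA' x) = x := LinearMap.congr_fun hSA.2
  have hB1 : ∀ x, SB' (HopfAlgebra.antipode k x) = x := LinearMap.congr_fun hSB.1
  have hB2 : ∀ x, HopfAlgebra.antipode k (SB' x) = x := LinearMap.congr_fun hSB.2
  have hp := aux_pair ω hω
  choose D hD using fun x => TensorProduct.exists_finset (R := k) (coactX x)
  have hcol := aux_colinear hX D hD
  have hlin := aux_linear hX
  have hinv := aux_inv hX D hD
  refine ⟨?_, ?_, ?_, ?_, ?_⟩
  · ext c x
    have e := hcop.1 (SA' (SA' c))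
    have e2 : ∀ i, ω (SA' (SA' (SA' c))) (HopfAlgebra.antipode k (b i)) =
        ω (SA' (SA' c)) (b i) := by
      intro i; rw [← hp, hA2]
    simp only [TensorProduct.AlgebraTensorModule.curry_apply, TensorProduct.curry_apply,
      LinearMap.restrictScalars_self, LinearMap.comp_apply, LinearMap.rTensor_tmul]
    conv_rhs => rw [← e]
    simp [omegaAct, omegaCoact, tmul_sum, sum_tmul, map_sum, LinearMap.sum_apply, hminus, hB1, e2,
      ← smul_tmul']
  · ext x
    have e2 : ∀ (g : A) i, ω g (SB' (b i)) = ω (SA' g) (b i) := by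
      intro g i
      conv_lhs => rw [← hA2 g]
      rw [hp, hB2]
    have e3 : ∀ g : A, ∑ i, ω (SA' g) (b i) • HopfAlgebra.antipode k
        (HopfAlgebra.antipode k (HopfAlgebra.antipode k (a i))) =
          HopfAlgebra.antipode k (HopfAlgebra.antipode k g) := by
      intro g
      have e := congrArg (fun z => HopfAlgebra.antipode k
        (HopfAlgebra.antipode k (HopfAlgebra.antipode k z))) (hcop.1 (SA' g))
      simpa [map_sum, hA2] using e
    simp only [omegaAct, omegaCoact, LinearMap.sum_apply, LinearMap.comp_apply,
      TensorProduct.mk_apply, LinearMap.rTensor_tmul, LinearMap.lTensor_tmul, hD x, tmul_sum,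
      map_sum, hB1, LinearEquiv.coe_coe, TensorProduct.assoc_symm_tmul, TensorProduct.comm_tmul,
      TensorProduct.lift.tmul, TensorProduct.lid_tmul, e2]
    rw [Finset.sum_comm]
    refine Finset.sum_congr rfl fun p _ => ?_
    rw [← e3, sum_tmul]
    simp [smul_tmul']
  · rw [Function.bijective_iff_has_inverse]
    refine ⟨fun x => ∑ p ∈ D x, actX (SA' (SA' p.1) ⊗ₜ p.2), fun x => ?_, fun x => ?_⟩
    · have e : ∀ y, ∑ p ∈ D y, actX (SA' (SA' p.1) ⊗ₜ p.2) =
          (actX ∘ₗ LinearMap.rTensor X (SA' ∘ₗ SA')) (coactX y) := by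
        intro y; simp [hD y, map_sum]
      simp only [e, hcol]
      simp [map_sum, hA1, hinv]
    · simp only [map_sum, hlin, hA2, hinv]
  · ext c x
    simp [hlin, hA2]
  · ext x
    simp only [LinearMap.comp_apply, hcol]
    simp [hD x, map_sum]

end Pairing

end
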